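/- Linear Hauptsatz: the cut rule is eliminable from the sequent calculus CLL of classical linear logic, that is, every sequent provable in CLL has a proof in CLL containing no instance of the cut rule. -/

import Mathlib

/-!
The proof is semantic, following Okada's phase-semantic argument. Finite multisets of formulas form a
commutative monoid; the pole is the set of *cut-free* provable multisets, and `perp X` is
the set of multisets `y` such that `x + y` is cut-free provable for all `x ∈ X`.  Every formula `A`
is interpreted by a fact `I A` (a set with `perp (perp (I A)) = I A`), exponentials being interpreted
by means of the submonoid `J` of multisets of `?`-formulas, and `I A.neg = perp (I A)`.

Two lemmas carry the argument.
* Soundness (`Valid.of_proof`): if `⊢ A₁, …, Aₙ` is provable, cuts allowed, then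
  `perp (I A₁) + ⋯ + perp (I Aₙ)` is contained in the pole.  Cut is sound because
  `I P.neg = perp (I P)`.
* Adequacy (`adequacy`): `{A} ∈ perp (I A)`, proved together with `{A.neg} ∈ I A` by induction
  on `A`, using only cut-free rules.

Since `{Aᵢ} ∈ perp (I Aᵢ)` for every `i`, soundness puts the multiset `{A₁, …, Aₙ}` itself
in the pole, which says that the sequent has a cut-free proof.
-/

/-!
The one-sided sequent calculus CLL for classical linear logic, and the
linear Hauptsatz (cut elimination).  Sequents `⊢ Γ` are finite lists of
formulas; in the rules below, `⊢ Γ, P` is encoded as `Γ ++ [P]` and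
`⊢ ¬P, Δ` as `P.neg :: Δ`.  The proof predicate carries a flag recording
whether the cut rule may be used.
-/

namespace CLL

/-- Formulas of classical linear logic: atoms `pos a`, negated atoms
`negA a`, units `1`, `⊥`, `0`, `⊤`, multiplicatives `⊗`, `⅋`, additives
`&`, `⊕`, exponentials `!`, `?`. -/
inductive LF : Type where
  | pos    : ℕ → LF
  | negA   : ℕ → LF
  | one    : LF
  | bot    : LF
  | zero   : LF
  | top    : LF
  | tensor : LF → LF → LF
  | parr   : LF → LF → LF
  | withC  : LF → LF → LF
  | oplus  : LF → LF → LF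
  | bang   : LF → LF
  | quest  : LF → LF
deriving DecidableEq

/-- Linear negation, extended to all formulas by the De Morgan laws. -/
def LF.neg : LF → LF
  | .pos a => .negA a
  | .negA a => .pos a
  | .one => .bot
  | .bot => .one
  | .zero => .top
  | .top => .zero
  | .tensor P Q => .parr P.neg Q.neg
  | .parr P Q => .tensor P.neg Q.neg
  | .withC P Q => .oplus P.neg Q.neg
  | .oplus P Q => .withC P.neg Q.neg
  | .bang P => .quest P.neg
  | .quest P => .bang P.neg

/-- Proofs in CLL of one-sided sequents.  `Proof c Γ` means `⊢ Γ` is provable,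
where the cut rule is allowed only when `c = true`. -/
inductive Proof : Bool → List LF → Prop where
  | id (c : Bool) (P : LF) : Proof c [P, P.neg]
  | cut (Γ Δ : List LF) (P : LF) :
      Proof true (Γ ++ [P]) → Proof true (P.neg :: Δ) → Proof true (Γ ++ Δ)
  | perm (c : Bool) (Γ Δ : List LF) (P Q : LF) :
      Proof c (Γ ++ P :: Q :: Δ) → Proof c (Γ ++ Q :: P :: Δ)
  | one (c : Bool) : Proof c [.one]
  | bot (c : Bool) (Γ : List LF) : Proof c Γ → Proof c (Γ ++ [.bot])
  | tensor (c : Bool) (Γ Δ : List LF) (P Q : LF) :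
      Proof c (Γ ++ [P]) → Proof c (Δ ++ [Q]) →
      Proof c (Γ ++ Δ ++ [P.tensor Q])
  | parr (c : Bool) (Γ : List LF) (P Q : LF) :
      Proof c (Γ ++ [P, Q]) → Proof c (Γ ++ [P.parr Q])
  | top (c : Bool) (Γ : List LF) : Proof c (Γ ++ [.top])
  | withR (c : Bool) (Γ : List LF) (P Q : LF) :
      Proof c (Γ ++ [P]) → Proof c (Γ ++ [Q]) → Proof c (Γ ++ [P.withC Q])
  | oplusL (c : Bool) (Γ : List LF) (P Q : LF) :
      Proof c (Γ ++ [P]) → Proof c (Γ ++ [P.oplus Q])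
  | oplusR (c : Bool) (Γ : List LF) (P Q : LF) :
      Proof c (Γ ++ [Q]) → Proof c (Γ ++ [P.oplus Q])
  | promote (c : Bool) (Γ : List LF) (P : LF) :
      Proof c (Γ.map .quest ++ [P]) → Proof c (Γ.map .quest ++ [P.bang])
  | weak (c : Bool) (Γ : List LF) (P : LF) :
      Proof c Γ → Proof c (Γ ++ [P.quest])
  | derel (c : Bool) (Γ : List LF) (P : LF) :
      Proof c (Γ ++ [P]) → Proof c (Γ ++ [P.quest])
  | contr (c : Bool) (Γ : List LF) (P : LF) :
      Proof c (Γ ++ [P.quest, P.quest]) → Proof c (Γ ++ [P.quest])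

open scoped Pointwise

/-! ### Cut-free provability of multisets -/

theorem Proof.of_perm {c : Bool} {l l' : List LF} (hp : l.Perm l') (h : Proof c l) :
    Proof c l' := by
  -- The induction needs an arbitrary prefix, since `Proof.perm` swaps in the middle of a list.
  suffices H : ∀ Γ, Proof c (Γ ++ l) → Proof c (Γ ++ l') from H [] h
  clear h
  induction hp with
  | nil => exact fun _ h => h
  | cons x _ ih =>
    intro Γ h
    simpa using ih (Γ ++ [x]) (by simpa using h)
  | swap x y l => exact fun Γ h => Proof.perm c Γ l y x h
  | trans _ _ ih₁ ih₂ => exact fun Γ h => ih₂ Γ (ih₁ Γ h)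

/-- The pole: `Prov m` says that the multiset `m`, listed in some order, has a cut-free proof. -/
def Prov (m : Multiset LF) : Prop := ∃ l : List LF, (l : Multiset LF) = m ∧ Proof false l

theorem prov_coe {l : List LF} : Prov (l : Multiset LF) ↔ Proof false l :=
  ⟨fun ⟨_, he, h⟩ => h.of_perm (Multiset.coe_eq_coe.1 he), fun h => ⟨l, rfl, h⟩⟩

theorem prov_add {l l' : List LF} :
    Prov ((l : Multiset LF) + (l' : Multiset LF)) ↔ Proof false (l ++ l') := by
  rw [Multiset.coe_add, prov_coe]

theorem prov_add_singleton {l : List LF} {A : LF} :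
    Prov ((l : Multiset LF) + {A}) ↔ Proof false (l ++ [A]) :=
  prov_add (l' := [A])

theorem Prov.id (A : LF) : Prov ({A} + {A.neg}) :=
  ⟨_, rfl, Proof.id false A⟩

theorem Prov.one : Prov {LF.one} := ⟨_, rfl, Proof.one false⟩

theorem Prov.bot {m : Multiset LF} (h : Prov m) : Prov (m + {LF.bot}) := by
  induction m using Quot.inductionOn with | _ l =>
  exact prov_add_singleton.2 (Proof.bot _ _ (prov_coe.1 h))

theorem Prov.top (m : Multiset LF) : Prov (m + {LF.top}) := by
  induction m using Quot.inductionOn with | _ l =>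
  exact prov_add_singleton.2 (Proof.top _ _)

theorem Prov.tensor {m n : Multiset LF} {A B : LF} (h : Prov (m + {A})) (h' : Prov (n + {B})) :
    Prov (m + n + {A.tensor B}) := by
  induction m using Quot.inductionOn with | _ l =>
  induction n using Quot.inductionOn with | _ l' =>
  exact prov_add_singleton (l := l ++ l').2
    (Proof.tensor _ _ _ _ _ (prov_add_singleton.1 h) (prov_add_singleton.1 h'))

theorem Prov.parr {m : Multiset LF} {A B : LF} (h : Prov (m + ({A} + {B}))) :
    Prov (m + {A.parr B}) := by
  induction m using Quot.inductionOn with | _ l =>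
  exact prov_add_singleton.2 (Proof.parr _ _ _ _ (prov_add (l' := [A, B]).1 h))

theorem Prov.withR {m : Multiset LF} {A B : LF} (h : Prov (m + {A})) (h' : Prov (m + {B})) :
    Prov (m + {A.withC B}) := by
  induction m using Quot.inductionOn with | _ l =>
  exact prov_add_singleton.2
    (Proof.withR _ _ _ _ (prov_add_singleton.1 h) (prov_add_singleton.1 h'))

theorem Prov.oplusL {m : Multiset LF} {A B : LF} (h : Prov (m + {A})) :
    Prov (m + {A.oplus B}) := by
  induction m using Quot.inductionOn with | _ l =>
  exact prov_add_singleton.2 (Proof.oplusL _ _ _ _ (prov_add_singleton.1 h))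

theorem Prov.oplusR {m : Multiset LF} {A B : LF} (h : Prov (m + {B})) :
    Prov (m + {A.oplus B}) := by
  induction m using Quot.inductionOn with | _ l =>
  exact prov_add_singleton.2 (Proof.oplusR _ _ _ _ (prov_add_singleton.1 h))

theorem Prov.derel {m : Multiset LF} {A : LF} (h : Prov (m + {A})) : Prov (m + {A.quest}) := by
  induction m using Quot.inductionOn with | _ l =>
  exact prov_add_singleton.2 (Proof.derel _ _ _ (prov_add_singleton.1 h))

theorem Prov.weak {m : Multiset LF} (A : LF) (h : Prov m) : Prov (m + {A.quest}) := by
  induction m using Quot.inductionOn with | _ l =>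
  exact prov_add_singleton.2 (Proof.weak _ _ _ (prov_coe.1 h))

theorem Prov.contr {m : Multiset LF} {A : LF} (h : Prov (m + ({A.quest} + {A.quest}))) :
    Prov (m + {A.quest}) := by
  induction m using Quot.inductionOn with | _ l =>
  exact prov_add_singleton.2 (Proof.contr _ _ _ (prov_add (l' := [A.quest, A.quest]).1 h))

/-- The submonoid of multisets all of whose members are `?`-formulas. -/
def J : AddSubmonoid (Multiset LF) where
  carrier := {m | ∃ l : List LF, m = (l.map LF.quest : List LF)}
  zero_mem' := ⟨[], rfl⟩
  add_mem' := by
    rintro _ _ ⟨l, rfl⟩ ⟨l', rfl⟩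
    exact ⟨l ++ l', by simp⟩

theorem quest_mem_J (A : LF) : {A.quest} ∈ J := ⟨[A], rfl⟩

theorem Prov.promote {m : Multiset LF} {A : LF} (hm : m ∈ J) (h : Prov (m + {A})) :
    Prov (m + {A.bang}) := by
  obtain ⟨l, rfl⟩ := hm
  exact prov_add_singleton.2 (Proof.promote _ _ _ (prov_add_singleton.1 h))

theorem Prov.weak_J {m n : Multiset LF} (hn : n ∈ J) (h : Prov m) : Prov (m + n) := by
  obtain ⟨l, rfl⟩ := hn
  induction l with
  | nil => simpa using h
  | cons A l ih =>
    convert Prov.weak A ih using 1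
    rw [List.map_cons, ← Multiset.cons_coe, ← Multiset.singleton_add]
    abel

theorem Prov.contr_J {m n : Multiset LF} (hn : n ∈ J) (h : Prov (m + (n + n))) :
    Prov (m + n) := by
  obtain ⟨l, rfl⟩ := hn
  induction l generalizing m with
  | nil => simpa using h
  | cons A l ih =>
    rw [List.map_cons, ← Multiset.cons_coe, ← Multiset.singleton_add] at h ⊢
    rw [← add_assoc]
    refine ih ?_
    rw [add_right_comm]
    refine Prov.contr ?_
    convert h using 1
    abel

/-! ### The phase space -/

/-- The orthogonal of a set of multisets with respect to the pole `Prov`. -/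
def perp (X : Set (Multiset LF)) : Set (Multiset LF) := {y | ∀ x ∈ X, Prov (x + y)}

variable {X Y : Set (Multiset LF)}

theorem perp_anti (h : X ⊆ Y) : perp Y ⊆ perp X := fun _ hy x hx => hy x (h hx)

theorem subset_perp_comm : X ⊆ perp Y ↔ Y ⊆ perp X := by
  constructor <;> intro h x hx y hy <;> rw [add_comm] <;> exact h hy x hx

theorem subset_perp_perp : X ⊆ perp (perp X) := subset_perp_comm.1 subset_rfl

theorem perp_perp_perp (X : Set (Multiset LF)) : perp (perp (perp X)) = perp X :=
  (perp_anti subset_perp_perp).antisymm subset_perp_perp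

theorem perp_union (X Y : Set (Multiset LF)) : perp (X ∪ Y) = perp X ∩ perp Y := by
  ext y
  simp only [perp, Set.mem_union, Set.mem_inter_iff, Set.mem_ofPred_eq, or_imp, forall_and]

theorem mem_perp_zero {y : Multiset LF} : y ∈ perp {0} ↔ Prov y := by simp [perp]

theorem mem_perp_add {y : Multiset LF} :
    y ∈ perp (X + Y) ↔ ∀ a ∈ X, ∀ b ∈ Y, Prov (a + b + y) := by
  simp only [perp, Set.mem_ofPred_eq, Set.mem_add]
  constructor
  · exact fun h a ha b hb => h _ ⟨a, ha, b, hb, rfl⟩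
  · rintro h _ ⟨a, ha, b, hb, rfl⟩
    exact h a ha b hb

theorem add_subset_pole : (∀ m ∈ X + Y, Prov m) ↔ X ⊆ perp Y := by
  constructor
  · intro h x hx y hy
    rw [add_comm]
    exact h _ (Set.add_mem_add hx hy)
  · intro h m hm
    obtain ⟨x, hx, y, hy, rfl⟩ := Set.mem_add.1 hm
    rw [add_comm]
    exact h hx y hy

theorem perp_perp_add_subset : perp (perp X) + perp (perp Y) ⊆ perp (perp (X + Y)) := by
  intro m hm z hz
  obtain ⟨u, hu, v, hv, rfl⟩ := Set.mem_add.1 hm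
  rw [mem_perp_add] at hz
  -- Moving one summand at a time across the pole: first `Y`, then `X`.
  have h₁ : ∀ a ∈ X, Prov (a + z + v) := by
    intro a ha
    refine hv _ fun b hb => ?_
    convert hz a ha b hb using 1
    abel
  have h₂ : Prov (z + v + u) := by
    refine hu _ fun a ha => ?_
    rw [← add_assoc]
    exact h₁ a ha
  convert h₂ using 1
  abel

/-- The interpretation of formulas as facts of the phase space.  An atom `a` is interpreted by the
set of contexts `Γ` such that `⊢ Γ, a` has a cut-free proof. -/
def I : LF → Set (Multiset LF)
  | .pos a => perp {{LF.pos a}}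
  | .negA a => perp (perp {{LF.pos a}})
  | .one => perp (perp {0})
  | .bot => perp {0}
  | .zero => perp Set.univ
  | .top => Set.univ
  | .tensor P Q => perp (perp (I P + I Q))
  | .parr P Q => perp (perp (I P) + perp (I Q))
  | .withC P Q => I P ∩ I Q
  | .oplus P Q => perp (perp (I P) ∩ perp (I Q))
  | .bang P => perp (perp (I P ∩ J))
  | .quest P => perp (perp (I P) ∩ J)

theorem I_fact (A : LF) : perp (perp (I A)) = I A := by
  induction A with
  | top => exact (Set.subset_univ _).antisymm subset_perp_perp
  | withC P Q ihP ihQ =>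
    simp only [I]
    rw [← ihP, ← ihQ, ← perp_union, perp_perp_perp]
  | _ => simp only [I, perp_perp_perp]

theorem I_neg (A : LF) : I A.neg = perp (I A) := by
  induction A with
  | zero => exact (I_fact .top).symm
  | oplus P Q ihP ihQ => simp only [LF.neg, I, ihP, ihQ, ← perp_union, perp_perp_perp]
  | _ => simp only [LF.neg, I, perp_perp_perp, I_fact, *]

/-! ### Adequacy -/

/-- Membership in `I A` may be tested against `perp (I A)`, because `I A` is a fact. -/
theorem mem_I {A : LF} {m : Multiset LF} (h : ∀ z ∈ perp (I A), Prov (z + m)) : m ∈ I A := by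
  rw [← I_fact A]
  exact h

theorem adequacy (A : LF) : {A} ∈ perp (I A) ∧ {A.neg} ∈ I A := by
  induction A with
  | pos a =>
    refine ⟨subset_perp_perp rfl, ?_⟩
    rintro _ rfl
    exact Prov.id (.pos a)
  | negA a =>
    refine ⟨?_, subset_perp_perp rfl⟩
    simp only [I, perp_perp_perp]
    rintro _ rfl
    exact Prov.id (.pos a)
  | one =>
    simp only [I, perp_perp_perp]
    exact ⟨mem_perp_zero.2 Prov.one, fun z hz => Prov.bot (mem_perp_zero.1 hz)⟩
  | bot => exact ⟨fun z hz => Prov.bot (mem_perp_zero.1 hz), mem_perp_zero.2 Prov.one⟩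
  | zero =>
    refine ⟨fun z hz => ?_, fun z _ => Prov.top z⟩
    rw [add_comm]
    exact hz _ trivial
  | top => exact ⟨fun z _ => Prov.top z, trivial⟩
  | tensor P Q ihP ihQ =>
    simp only [I, perp_perp_perp, mem_perp_add]
    refine ⟨fun a ha b hb => Prov.tensor (ihP.1 a ha) (ihQ.1 b hb), fun z hz => Prov.parr ?_⟩
    rw [add_comm]
    exact hz _ (Set.add_mem_add ihP.2 ihQ.2)
  | parr P Q ihP ihQ =>
    constructor
    · intro z hz
      refine Prov.parr ?_
      rw [add_comm]
      exact hz _ (Set.add_mem_add ihP.1 ihQ.1)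
    · refine mem_perp_add.2 fun a ha b hb => Prov.tensor ?_ ?_
      · rw [add_comm]
        exact ha _ ihP.2
      · rw [add_comm]
        exact hb _ ihQ.2
  | withC P Q ihP ihQ =>
    refine ⟨fun z hz => Prov.withR (ihP.1 z hz.1) (ihQ.1 z hz.2), mem_I fun z hz => ?_,
      mem_I fun z hz => ?_⟩
    · refine Prov.oplusL ?_
      rw [add_comm]
      exact hz _ ihP.2
    · refine Prov.oplusR ?_
      rw [add_comm]
      exact hz _ ihQ.2
  | oplus P Q ihP ihQ =>
    constructor
    · simp only [I, ← perp_union, perp_perp_perp]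
      rintro z (hz | hz)
      · exact Prov.oplusL (ihP.1 z hz)
      · exact Prov.oplusR (ihQ.1 z hz)
    · rintro z ⟨hP, hQ⟩
      refine Prov.withR ?_ ?_
      · rw [add_comm]
        exact hP _ ihP.2
      · rw [add_comm]
        exact hQ _ ihQ.2
  | bang P ih =>
    constructor
    · simp only [I, perp_perp_perp]
      exact fun z hz => Prov.promote hz.2 (ih.1 z hz.1)
    · refine subset_perp_perp ⟨mem_I fun z hz => Prov.derel ?_, quest_mem_J _⟩
      rw [add_comm]
      exact hz _ ih.2
  | quest P ih =>
    constructor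
    · exact subset_perp_perp ⟨fun z hz => Prov.derel (ih.1 z hz), quest_mem_J _⟩
    · refine fun z hz => Prov.promote hz.2 ?_
      rw [add_comm]
      exact hz.1 _ ih.2

/-! ### Soundness -/

/-- The sum `perp (I A₁) + ⋯ + perp (I Aₙ)` of the orthogonals of the formulas of a sequent. -/
def S (Γ : List LF) : Set (Multiset LF) := (Γ.map fun A => perp (I A)).sum

theorem S_cons (A : LF) (Γ : List LF) : S (A :: Γ) = perp (I A) + S Γ := by simp [S]

theorem S_append (Γ Δ : List LF) : S (Γ ++ Δ) = S Γ + S Δ := by simp [S]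

theorem S_singleton (A : LF) : S [A] = perp (I A) := by simp [S]

/-- Semantic validity of a sequent. -/
def Valid (Γ : List LF) : Prop := ∀ m ∈ S Γ, Prov m

theorem valid_snoc {Γ : List LF} {A : LF} : Valid (Γ ++ [A]) ↔ S Γ ⊆ I A := by
  rw [Valid, S_append, S_singleton, add_subset_pole, I_fact]

/-- For a sequent of `?`-formulas, `S` is contained in the biorthogonal of a subset `T` of itself
made of elements of `J`.  This gives the soundness of promotion: if `S (?Γ) ⊆ I P`, then
`T ⊆ I P ∩ J`, hence `S (?Γ) ⊆ perp (perp (I P ∩ J))`. -/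
theorem S_map_quest (Γ : List LF) :
    ∃ T : Set (Multiset LF), T ⊆ J ∧ T ⊆ S (Γ.map LF.quest) ∧
      S (Γ.map LF.quest) ⊆ perp (perp T) := by
  induction Γ with
  | nil =>
    refine ⟨{0}, ?_, ?_, ?_⟩
    · exact Set.singleton_subset_iff.2 J.zero_mem
    · simp [S]
    · exact subset_perp_perp
  | cons A Γ ih =>
    obtain ⟨T, hJ, hT, hS⟩ := ih
    refine ⟨(perp (I A) ∩ J) + T, ?_, ?_, ?_⟩
    · rintro m hm
      obtain ⟨u, hu, v, hv, rfl⟩ := Set.mem_add.1 hm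
      exact J.add_mem hu.2 (hJ hv)
    · rw [List.map_cons, S_cons]
      exact Set.add_subset_add subset_perp_perp hT
    · rw [List.map_cons, S_cons]
      exact (Set.add_subset_add subset_rfl hS).trans perp_perp_add_subset

theorem Valid.of_proof {c : Bool} {Γ : List LF} (h : Proof c Γ) : Valid Γ := by
  induction h with
  | id c P =>
    refine valid_snoc (Γ := [P]).2 ?_
    rw [S_singleton, I_neg]
  | cut Γ Δ P _ _ ih₁ ih₂ =>
    rw [valid_snoc] at ih₁
    rw [Valid, S_cons, add_comm, add_subset_pole, I_neg, I_fact] at ih₂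
    rw [Valid, S_append, add_subset_pole]
    exact ih₁.trans (subset_perp_comm.1 ih₂)
  | perm c Γ Δ P Q _ ih =>
    have hS : S (Γ ++ Q :: P :: Δ) = S (Γ ++ P :: Q :: Δ) := by
      simp only [S_append, S_cons]
      rw [add_left_comm (perp (I Q))]
    rwa [Valid, hS]
  | one c =>
    refine valid_snoc (Γ := []).2 ?_
    exact subset_perp_perp
  | bot c Γ _ ih => exact valid_snoc.2 fun m hm => mem_perp_zero.2 (ih m hm)
  | tensor c Γ Δ P Q _ _ ih₁ ih₂ =>
    rw [valid_snoc] at ih₁ ih₂ ⊢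
    rw [S_append]
    exact (Set.add_subset_add ih₁ ih₂).trans subset_perp_perp
  | parr c Γ P Q _ ih =>
    rw [Valid, S_append, S_cons, S_singleton, add_subset_pole] at ih
    exact valid_snoc.2 ih
  | top c Γ => exact valid_snoc.2 (Set.subset_univ _)
  | withR c Γ P Q _ _ ih₁ ih₂ =>
    exact valid_snoc.2 (Set.subset_inter (valid_snoc.1 ih₁) (valid_snoc.1 ih₂))
  | oplusL c Γ P Q _ ih =>
    exact valid_snoc.2
      ((valid_snoc.1 ih).trans (subset_perp_comm.1 Set.inter_subset_left))
  | oplusR c Γ P Q _ ih =>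
    exact valid_snoc.2
      ((valid_snoc.1 ih).trans (subset_perp_comm.1 Set.inter_subset_right))
  | promote c Γ P _ ih =>
    rw [valid_snoc] at ih ⊢
    obtain ⟨T, hJ, hT, hS⟩ := S_map_quest Γ
    exact hS.trans (perp_anti (perp_anti (Set.subset_inter (hT.trans ih) hJ)))
  | weak c Γ P _ ih =>
    refine valid_snoc.2 fun m hm z hz => ?_
    rw [add_comm]
    exact Prov.weak_J hz.2 (ih m hm)
  | derel c Γ P _ ih =>
    exact valid_snoc.2
      ((valid_snoc.1 ih).trans (subset_perp_comm.1 Set.inter_subset_left))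
  | contr c Γ P _ ih =>
    rw [Valid, S_append, S_cons, S_singleton] at ih
    refine valid_snoc.2 fun m hm z hz => ?_
    have hz' : z ∈ perp (I P.quest) := subset_perp_perp hz
    rw [add_comm]
    exact Prov.contr_J hz.2 (ih _ (Set.add_mem_add hm (Set.add_mem_add hz' hz')))

/-- Linear Hauptsatz.
The cut rule is eliminable from CLL: every sequent provable in CLL has a
proof in CLL containing no instance of the cut rule. -/
theorem linear_hauptsatz (Γ : List LF) (h : Proof true Γ) :
    Proof false Γ := by
  have hmem : (Γ : Multiset LF) ∈ S Γ := by
    clear h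
    induction Γ with
    | nil => simp [S]
    | cons A Γ ih =>
      rw [S_cons]
      exact Set.mem_add.2 ⟨{A}, (adequacy A).1, Γ, ih, rfl⟩
  exact prov_coe.1 (Valid.of_proof h _ hmem)

end CLL
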